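/- arXiv:2512.14605 — 2 statements merged into one kernel-verified Lean document; each statement's English description precedes it below -/
import Mathlib

section
/- For every odd natural number k, the derivation D_1 commutes with D_k: for every polynomial P in R one has D_1(D_k(P)) = D_k(D_1(P)) (equivalently, [D_1, D_k] = 0). -/
open MvPolynomial Finset

noncomputable section

/-- The polynomial ring `R = ℂ[b_{i,2j-1} : i ∈ {1,2,3}, j ≥ 1]`. -/
abbrev R : Type := MvPolynomial (Fin 3 × ℕ+) ℂ

/-- `b i j` denotes the variable `b_{i+1, j}`, intended for odd `j ≥ 1`;
the variable `b_{i+1, 2m-1}` is `X (i, m)`. -/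
def b (i : Fin 3) (j : ℕ) : R := MvPolynomial.X (i, ⟨j / 2 + 1, Nat.succ_pos _⟩)

/-- The derivation `D_1`, determined by its values on the variables. -/
def D1 : Derivation ℂ R R :=
  MvPolynomial.mkDerivation ℂ fun p =>
    let j : ℕ := 2 * (p.2 : ℕ) - 1
    if p.1 = 0 then b 1 j
    else if p.1 = 1 then b 2 j
    else 4 * (2 * b 0 1 * b 1 j + b 1 1 * b 0 j + b 1 (j + 2))

/-- The value of `D_k` on the variable `b_{1,j}` (for odd `k`, `j`). -/
def DB1 (k j : ℕ) : R :=
  b 1 (j + k - 1) + ∑ s ∈ Finset.Icc 1 ((k - 1) / 2),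
    (b 1 (2 * s - 1) * b 0 (j + k - 2 * s - 1) - b 0 (2 * s - 1) * b 1 (j + k - 2 * s - 1))

/-- The derivation `D_k` (intended for odd `k`), determined by
`D_k(b_{1,j}) = DB1 k j`, `D_k(b_{2,j}) = D_1(D_k(b_{1,j}))`, `D_k(b_{3,j}) = D_1(D_k(b_{2,j}))`. -/
def D (k : ℕ) : Derivation ℂ R R :=
  MvPolynomial.mkDerivation ℂ fun p =>
    let j : ℕ := 2 * (p.2 : ℕ) - 1
    if p.1 = 0 then DB1 k j
    else if p.1 = 1 then D1 (DB1 k j)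
    else D1 (D1 (DB1 k j))

end


noncomputable section

/-- `xx i m` is the variable `b_{i+1,2m+1}`. -/
def xx (i : Fin 3) (m : ℕ) : R := b i (2 * m + 1)

lemma xx_eq (i : Fin 3) (m : ℕ) : xx i m = MvPolynomial.X (i, ⟨m + 1, Nat.succ_pos _⟩) := by
  have h : (2 * m + 1) / 2 = m := by omega
  simp [xx, b, h]

lemma idx_eq (m : ℕ) : 2 * (m + 1) - 1 = 2 * m + 1 := by omega

lemma D1_0 (m : ℕ) : D1 (xx 0 m) = xx 1 m := by
  rw [xx_eq, D1, mkDerivation_X]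
  simp [idx_eq, xx]

lemma D1_1 (m : ℕ) : D1 (xx 1 m) = xx 2 m := by
  rw [xx_eq, D1, mkDerivation_X]
  simp [idx_eq, xx]

lemma D1_2 (m : ℕ) : D1 (xx 2 m) =
    4 * (2 * xx 0 0 * xx 1 m + xx 1 0 * xx 0 m + xx 1 (m + 1)) := by
  rw [xx_eq, D1, mkDerivation_X]
  simp [idx_eq, xx]
  rfl

lemma D1_two : D1 (2 : R) = 0 := by
  simpa using Derivation.map_natCast D1 2

lemma D1_four : D1 (4 : R) = 0 := by
  simpa using Derivation.map_natCast D1 4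

lemma Dk_two (k : ℕ) : D k (2 : R) = 0 := by
  simpa using Derivation.map_natCast (D k) 2

lemma Dk_four (k : ℕ) : D k (4 : R) = 0 := by
  simpa using Derivation.map_natCast (D k) 4

/-- The Wronskian terms. -/
def W (a c : ℕ) : R := xx 1 a * xx 0 c - xx 0 a * xx 1 c

/-- The telescoping terms. -/
def T (a c : ℕ) : R := xx 2 a * xx 0 c + 2 * xx 1 a * xx 1 c

/-- The value of `D_{2n+1}` on `x_m`. -/
def Y (n m : ℕ) : R := xx 1 (m + n) + ∑ s ∈ range n, W s (m + n - 1 - s)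

lemma DB1_eq (n m : ℕ) : DB1 (2 * n + 1) (2 * m + 1) = Y n m := by
  unfold DB1 Y
  have h1 : 2 * m + 1 + (2 * n + 1) - 1 = 2 * (m + n) + 1 := by omega
  have h2 : (2 * n + 1 - 1) / 2 = n := by omega
  rw [h1, h2, ← xx, Finset.range_eq_Ico, Finset.sum_Ico_eq_sum_range,
    ← Finset.Ico_add_one_right_eq_Icc, Finset.sum_Ico_eq_sum_range]
  congr 1
  refine Finset.sum_congr (by simp) fun s hs => ?_
  have hs : s < n := by simpa using hs
  have h3 : 2 * (1 + s) - 1 = 2 * s + 1 := by omega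
  have h4 : 2 * m + 1 + (2 * n + 1) - 2 * (1 + s) - 1 = 2 * (m + n - 1 - s) + 1 := by omega
  rw [h3, h4, Nat.zero_add]
  rfl

lemma Dk_0 (n m : ℕ) : D (2 * n + 1) (xx 0 m) = Y n m := by
  rw [xx_eq, D, mkDerivation_X]
  simp [idx_eq, DB1_eq]

lemma Dk_1 (n m : ℕ) : D (2 * n + 1) (xx 1 m) = D1 (Y n m) := by
  rw [xx_eq, D, mkDerivation_X]
  simp [idx_eq, DB1_eq]

lemma Dk_2 (n m : ℕ) : D (2 * n + 1) (xx 2 m) = D1 (D1 (Y n m)) := by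
  rw [xx_eq, D, mkDerivation_X]
  simp [idx_eq, DB1_eq]

lemma X_eq (p : Fin 3 × ℕ+) : (MvPolynomial.X p : R) = xx p.1 ((p.2 : ℕ) - 1) := by
  obtain ⟨i, j, hj⟩ := p
  rw [xx_eq]
  congr 2
  apply PNat.eq
  simp
  omega

lemma D_one : D 1 = D1 := by
  refine MvPolynomial.derivation_ext fun p => ?_
  rw [X_eq]
  obtain ⟨i, j⟩ := p
  have hY : ∀ m, Y 0 m = xx 1 m := fun m => by simp [Y]
  have h0 := Dk_0 0
  have h1 := Dk_1 0
  have h2 := Dk_2 0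
  simp only [Nat.mul_zero, Nat.zero_add, hY] at h0 h1 h2
  fin_cases i
  · exact (h0 _).trans (D1_0 _).symm
  · exact h1 _
  · exact (h2 _).trans (congrArg D1 (D1_1 _))

lemma W_step (a c : ℕ) : D1 (D1 (D1 (W a c))) =
    4 * (2 * xx 0 0 * D1 (W a c) + xx 1 0 * W a c + D1 (W a (c + 1)))
      + (4 * T (a + 1) c - 4 * T a (c + 1)) := by
  simp only [W, T, map_add, map_sub, Derivation.leibniz, smul_eq_mul, D1_0, D1_1, D1_2, D1_two, D1_four]
  ring

lemma sum_W_zero (n : ℕ) : ∑ s ∈ range n, W s (n - 1 - s) = 0 := by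
  have h := Finset.sum_range_reflect (fun s => W s (n - 1 - s)) n
  have h2 : ∑ s ∈ range n, W (n - 1 - s) (n - 1 - (n - 1 - s))
      = - ∑ s ∈ range n, W s (n - 1 - s) := by
    rw [← Finset.sum_neg_distrib]
    refine Finset.sum_congr rfl fun s hs => ?_
    have hs := Finset.mem_range.1 hs
    have h3 : n - 1 - (n - 1 - s) = s := by omega
    rw [h3]
    simp only [W]
    ring
  rw [h2] at h
  exact self_eq_neg.1 h.symm

lemma sum_step (n m : ℕ) :
    D1 (D1 (D1 (∑ s ∈ range n, W s (m + n - 1 - s)))) =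
    4 * (2 * xx 0 0 * D1 (∑ s ∈ range n, W s (m + n - 1 - s))
      + xx 1 0 * (∑ s ∈ range n, W s (m + n - 1 - s))
      + D1 (∑ s ∈ range n, W s (m + 1 + n - 1 - s))) + (4 * T n m - 4 * T 0 (m + n)) := by
  have ht := Finset.sum_range_sub (fun s => 4 * T s (m + n - s)) n
  simp only [Nat.add_sub_cancel, Nat.sub_zero] at ht
  rw [← ht]
  simp only [map_sum, Finset.mul_sum, ← Finset.sum_add_distrib]
  refine Finset.sum_congr rfl fun s hs => ?_
  have hs := Finset.mem_range.1 hs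
  have e1 : m + 1 + n - 1 - s = m + n - 1 - s + 1 := by omega
  have e2 : m + n - s = m + n - 1 - s + 1 := by omega
  have e3 : m + n - (s + 1) = m + n - 1 - s := by omega
  rw [W_step, e1, e2, e3]

lemma Y_zero (n : ℕ) : Y n 0 = xx 1 n := by
  simp [Y, sum_W_zero]

lemma Y_step (n m : ℕ) : D1 (D1 (D1 (Y n m))) =
    4 * (2 * Y n 0 * xx 1 m + 2 * xx 0 0 * D1 (Y n m) + D1 (Y n 0) * xx 0 m
      + xx 1 0 * Y n m + D1 (Y n (m + 1))) := by
  rw [Y_zero]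
  unfold Y
  have e : m + 1 + n = m + n + 1 := by omega
  have h := sum_step n m
  simp only [map_add]
  rw [h]
  simp only [T, e, map_add, Derivation.leibniz, smul_eq_mul, D1_0, D1_1, D1_2, D1_two, D1_four]
  ring

end

/-- For every odd natural number `k`, the derivation `D_1` commutes with `D_k`. -/
theorem commute_D1_Dk (k : ℕ) (hk : Odd k) :
    ∀ P : R, D 1 (D k P) = D k (D 1 P) := by
  obtain ⟨n, rfl⟩ := hk
  rw [D_one]
  have key : ⁅D1, D (2 * n + 1)⁆ = 0 := by
    refine MvPolynomial.derivation_ext fun p => ?_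
    rw [X_eq]
    obtain ⟨i, j⟩ := p
    generalize ((j : ℕ) - 1) = m
    rw [Derivation.commutator_apply, Derivation.zero_apply, sub_eq_zero]
    fin_cases i
    · change D1 (D _ (xx 0 m)) = D _ (D1 (xx 0 m))
      rw [Dk_0, D1_0, Dk_1]
    · change D1 (D _ (xx 1 m)) = D _ (D1 (xx 1 m))
      rw [Dk_1, D1_1, Dk_2]
    · change D1 (D _ (xx 2 m)) = D _ (D1 (xx 2 m))
      rw [Dk_2, D1_2, Y_step]
      simp only [map_add, Derivation.leibniz, smul_eq_mul, Dk_0, Dk_1, Dk_two, Dk_four]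
      ring
  intro P
  have h := congrArg (fun d : Derivation ℂ R R => d P) key
  simpa [Derivation.commutator_apply, sub_eq_zero] using h
end

section
/- For all odd natural numbers k and j, the following explicit formula holds: D_k(b_{3,j}) = 4(2 b_{1,1} b_{2,j+k-1} + b_{2,1} b_{1,j+k-1} + b_{2,j+k+1}) + 4 Σ_{s=1}^{(k-1)/2} (2 b_{1,1} b_{2,2s-1} + b_{2,1} b_{1,2s-1} + b_{2,2s+1}) b_{1,j+k-2s-1} + Σ_{s=1}^{(k-1)/2} (b_{3,2s-1} b_{2,j+k-2s-1} − b_{2,2s-1} b_{3,j+k-2s-1}) − 4 Σ_{s=1}^{(k-1)/2} b_{1,2s-1} (2 b_{1,1} b_{2,j+k-2s-1} + b_{2,1} b_{1,j+k-2s-1} + b_{2,j+k-2s+1}). -/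
open MvPolynomial Finset

theorem D1_b0 (j : ℕ) (hj : Odd j) : D1 (b 0 j) = b 1 j := by
  obtain ⟨m, rfl⟩ := hj
  have h : (2 * m + 1) / 2 = m := by omega
  have h2 : 2 * (m + 1) - 1 = 2 * m + 1 := by omega
  conv_lhs => rw [b, D1, mkDerivation_X]
  simp [h, h2]

theorem D1_b1 (j : ℕ) (hj : Odd j) : D1 (b 1 j) = b 2 j := by
  obtain ⟨m, rfl⟩ := hj
  have h : (2 * m + 1) / 2 = m := by omega
  have h2 : 2 * (m + 1) - 1 = 2 * m + 1 := by omega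
  conv_lhs => rw [b, D1, mkDerivation_X]
  simp [h, h2]

theorem D1_b2 (j : ℕ) (hj : Odd j) :
    D1 (b 2 j) = 4 * (2 * b 0 1 * b 1 j + b 1 1 * b 0 j + b 1 (j + 2)) := by
  obtain ⟨m, rfl⟩ := hj
  have h : (2 * m + 1) / 2 = m := by omega
  have h2 : 2 * (m + 1) - 1 = 2 * m + 1 := by omega
  conv_lhs => rw [b, D1, mkDerivation_X]
  simp [h, h2]

theorem D_b2 (k j : ℕ) (hj : Odd j) : D k (b 2 j) = D1 (D1 (DB1 k j)) := by
  obtain ⟨m, rfl⟩ := hj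
  have h : (2 * m + 1) / 2 = m := by omega
  have h2 : 2 * (m + 1) - 1 = 2 * m + 1 := by omega
  conv_lhs => rw [b, D, mkDerivation_X]
  simp [h, h2]

theorem D1_D1_term (p q : ℕ) (hp : Odd p) (hq : Odd q) :
    D1 (D1 (b 1 p * b 0 q - b 0 p * b 1 q)) =
      4 * ((2 * b 0 1 * b 1 p + b 1 1 * b 0 p + b 1 (p + 2)) * b 0 q)
      + (b 2 p * b 1 q - b 1 p * b 2 q)
      - 4 * (b 0 p * (2 * b 0 1 * b 1 q + b 1 1 * b 0 q + b 1 (q + 2))) := by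
  simp only [map_sub, map_add, Derivation.leibniz, smul_eq_mul, D1_b0 _ hp, D1_b0 _ hq,
    D1_b1 _ hp, D1_b1 _ hq, D1_b2 _ hp, D1_b2 _ hq]
  ring

/-- explicit formula for `D_k(b_{3,j})` for odd `k`, `j`. -/
theorem Dk_b3j (k j : ℕ) (hk : Odd k) (hj : Odd j) :
    D k (b 2 j) =
      4 * (2 * b 0 1 * b 1 (j + k - 1) + b 1 1 * b 0 (j + k - 1) + b 1 (j + k + 1))
      + 4 * ∑ s ∈ Finset.Icc 1 ((k - 1) / 2),
          (2 * b 0 1 * b 1 (2 * s - 1) + b 1 1 * b 0 (2 * s - 1) + b 1 (2 * s + 1))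
            * b 0 (j + k - 2 * s - 1)
      + ∑ s ∈ Finset.Icc 1 ((k - 1) / 2),
          (b 2 (2 * s - 1) * b 1 (j + k - 2 * s - 1)
            - b 1 (2 * s - 1) * b 2 (j + k - 2 * s - 1))
      - 4 * ∑ s ∈ Finset.Icc 1 ((k - 1) / 2),
          b 0 (2 * s - 1) * (2 * b 0 1 * b 1 (j + k - 2 * s - 1)
            + b 1 1 * b 0 (j + k - 2 * s - 1) + b 1 (j + k - 2 * s + 1)) := by
  rw [D_b2 k j hj, DB1]
  have ho : Odd (j + k - 1) := by
    obtain ⟨m, rfl⟩ := hj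
    obtain ⟨n, rfl⟩ := hk
    exact ⟨m + n, by omega⟩
  have hjk : j + k - 1 + 2 = j + k + 1 := by
    have := hj.pos
    omega
  rw [map_add, map_add, D1_b1 _ ho, D1_b2 _ ho, hjk, map_sum, map_sum]
  have reassoc : ∀ x y z w : R, x + y + z - w = x + (y + z - w) := fun x y z w => by ring
  rw [reassoc, Finset.mul_sum, Finset.mul_sum, ← Finset.sum_add_distrib,
    ← Finset.sum_sub_distrib]
  congr 1
  refine Finset.sum_congr rfl fun s hs => ?_
  rw [Finset.mem_Icc] at hs
  obtain ⟨m, rfl⟩ := hj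
  obtain ⟨n, rfl⟩ := hk
  have h1 : Odd (2 * s - 1) := ⟨s - 1, by omega⟩
  have h2 : Odd (2 * m + 1 + (2 * n + 1) - 2 * s - 1) := ⟨m + n - s, by omega⟩
  have h3 : 2 * s - 1 + 2 = 2 * s + 1 := by omega
  have h4 : 2 * m + 1 + (2 * n + 1) - 2 * s - 1 + 2 = 2 * m + 1 + (2 * n + 1) - 2 * s + 1 := by
    omega
  rw [D1_D1_term _ _ h1 h2, h3, h4]
end
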